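/- The operator A_N = K_N − M_N, where K_N is a degenerate-kernel integral operator of finite rank N and M_N is multiplication by a piecewise constant function taking N values, has spectrum consisting of at most finitely many eigenvalues outside the set {−m_1, ..., −m_N} of negatives of the multiplier values; more precisely, any element λ of the spectrum of A_N with λ ∉ {−m_1,...,−m_N} is an eigenvalue of the N×N matrix A with entries a_{ij} = α k(t_i,t_j) ∫_a^b ψ_i(x)² dx − m_i δ_{ij}. -/

import Mathlib

open MeasureTheory Set

lemma degen_integrable_mul {μ : Measure ℝ} [IsFiniteMeasure μ] {p f : ℝ → ℂ}
    (hp : Measurable p) (hpb : ∃ B : ℝ, ∀ y, ‖p y‖ ≤ B) (hf : MemLp f ⊤ μ) :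
    Integrable (fun y => p y * f y) μ := by
  obtain ⟨B, hB⟩ := hpb
  exact (hf.integrable le_top).bdd_mul hp.aestronglyMeasurable (Filter.Eventually.of_forall hB)

lemma degen_kernel_expand {μ : Measure ℝ} [IsFiniteMeasure μ] {N : ℕ} {ψ : Fin N → ℝ → ℂ}
    (hψmeas : ∀ i, Measurable (ψ i)) (hψbd : ∀ i, ∃ B : ℝ, ∀ y, ‖ψ i y‖ ≤ B)
    (K : Fin N → Fin N → ℂ) {f : ℝ → ℂ} (hf : MemLp f ⊤ μ) (y : ℝ) :
    ∫ u, (∑ i : Fin N, ∑ j : Fin N, K i j * ψ i y * ψ j u) * f u ∂μ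
      = ∑ i, (∑ j, K i j * ∫ u, ψ j u * f u ∂μ) * ψ i y := by
  have h1 : ∀ u, (∑ i : Fin N, ∑ j : Fin N, K i j * ψ i y * ψ j u) * f u
      = ∑ i : Fin N, ∑ j : Fin N, (K i j * ψ i y) * (ψ j u * f u) := by
    intro u
    simp only [Finset.sum_mul, mul_assoc]
  have hi : ∀ j, Integrable (fun u => ψ j u * f u) μ := fun j =>
    degen_integrable_mul (hψmeas j) (hψbd j) hf
  simp only [h1]
  rw [integral_finsetSum _ (fun i _ => integrable_finsetSum _ (fun j _ => (hi j).const_mul _))]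
  refine Finset.sum_congr rfl fun i _ => ?_
  rw [integral_finsetSum _ (fun j _ => (hi j).const_mul _), Finset.sum_mul]
  refine Finset.sum_congr rfl fun j _ => ?_
  rw [integral_const_mul]
  ring

lemma degen_memLp {μ : Measure ℝ} [IsFiniteMeasure μ] {N : ℕ} {ψ : Fin N → ℝ → ℂ}
    (hψmeas : ∀ i, Measurable (ψ i)) (hψbd : ∀ i, ∃ B : ℝ, ∀ y, ‖ψ i y‖ ≤ B)
    (d : Fin N → ℂ) : MemLp (fun y => ∑ i, d i * ψ i y) ⊤ μ := by
  refine memLp_finsetSum _ fun i _ => ?_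
  obtain ⟨B, hB⟩ := hψbd i
  exact (memLp_top_of_bound (hψmeas i).aestronglyMeasurable B
    (Filter.Eventually.of_forall hB)).const_mul _

lemma degen_moment {μ : Measure ℝ} [IsFiniteMeasure μ] {N : ℕ} {ψ : Fin N → ℝ → ℂ}
    (hψmeas : ∀ i, Measurable (ψ i)) (hψbd : ∀ i, ∃ B : ℝ, ∀ y, ‖ψ i y‖ ≤ B)
    (horth : ∀ i p : Fin N, i ≠ p → ∫ y, ψ i y * ψ p y ∂μ = 0)
    (d : Fin N → ℂ) {f h : ℝ → ℂ} (hh : MemLp h ⊤ μ)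
    (hf : f =ᵐ[μ] fun y => h y + ∑ i, d i * ψ i y) (l : Fin N) :
    ∫ u, ψ l u * f u ∂μ = ∫ u, ψ l u * h u ∂μ + d l * ∫ u, (ψ l u) ^ 2 ∂μ := by
  have hi : ∀ i, Integrable (fun u => ψ l u * ψ i u) μ := fun i => by
    obtain ⟨B, hB⟩ := hψbd i
    exact degen_integrable_mul (hψmeas l) (hψbd l)
      (memLp_top_of_bound (hψmeas i).aestronglyMeasurable B (Filter.Eventually.of_forall hB))
  have h1 : ∫ u, ψ l u * f u ∂μ
      = ∫ u, (ψ l u * h u + ∑ i, d i * (ψ l u * ψ i u)) ∂μ := by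
    refine integral_congr_ae ?_
    filter_upwards [hf] with u hu
    rw [hu, mul_add, Finset.mul_sum]
    congr 1
    exact Finset.sum_congr rfl fun i _ => by ring
  rw [h1, integral_add (degen_integrable_mul (hψmeas l) (hψbd l) hh)
    (integrable_finsetSum _ (fun i _ => (hi i).const_mul _)),
    integral_finsetSum _ (fun i _ => (hi i).const_mul _)]
  congr 1
  rw [Finset.sum_eq_single l]
  · rw [integral_const_mul]
    simp only [pow_two]
  · intro i _ hil
    rw [integral_const_mul, horth l i (Ne.symm hil), mul_zero]
  · simp

lemma degen_main {μ : Measure ℝ} [IsFiniteMeasure μ] {N : ℕ} (α : ℂ) {ψ : Fin N → ℝ → ℂ}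
    (hψmeas : ∀ i, Measurable (ψ i)) (hψbd : ∀ i, ∃ B : ℝ, ∀ y, ‖ψ i y‖ ≤ B)
    (horth : ∀ i p : Fin N, i ≠ p → ∫ y, ψ i y * ψ p y ∂μ = 0)
    (K : Fin N → Fin N → ℂ) (m : Fin N → ℝ) (s : ℝ → ℝ)
    (hs_supp : ∀ (i : Fin N) (y : ℝ), ψ i y ≠ 0 → s y = m i)
    (hs_range : ∀ᵐ y ∂μ, ∃ i, s y = m i)
    (AN : Lp ℂ ⊤ μ →L[ℂ] Lp ℂ ⊤ μ)
    (hAN : ∀ f : Lp ℂ ⊤ μ, ⇑(AN f) =ᵐ[μ] fun y =>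
        α * (∫ u, (∑ i : Fin N, ∑ j : Fin N, K i j * ψ i y * ψ j u) * f u ∂μ)
        - (s y : ℂ) * f y)
    (lam : ℂ) (hlam : lam ∈ spectrum ℂ AN) (hne : ∀ i : Fin N, lam ≠ -(m i : ℂ)) :
    ∃ c : Fin N → ℂ, c ≠ 0 ∧ ∀ l, α * (∑ j, K l j * c j) * (∫ y, (ψ l y) ^ 2 ∂μ)
      = (lam + m l) * c l := by
  classical
  by_contra hcon
  push Not at hcon
  have hne' : ∀ i, lam + (m i : ℂ) ≠ 0 := fun i h => hne i (eq_neg_of_add_eq_zero_left h)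
  apply hlam
  -- reduced form of AN
  have hA : ∀ f : Lp ℂ ⊤ μ, ⇑(AN f) =ᵐ[μ] fun y =>
      α * (∑ i, (∑ j, K i j * ∫ u, ψ j u * f u ∂μ) * ψ i y) - (s y : ℂ) * f y := by
    intro f
    filter_upwards [hAN f] with y hy
    rw [hy, degen_kernel_expand hψmeas hψbd K (Lp.memLp f) y]
  have hT : ∀ f : Lp ℂ ⊤ μ, ⇑((algebraMap ℂ (Lp ℂ ⊤ μ →L[ℂ] Lp ℂ ⊤ μ) lam - AN) f) =ᵐ[μ]
      fun y => (lam + s y) * f y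
        - α * (∑ i, (∑ j, K i j * ∫ u, ψ j u * f u ∂μ) * ψ i y) := by
    intro f
    have e : (algebraMap ℂ (Lp ℂ ⊤ μ →L[ℂ] Lp ℂ ⊤ μ) lam - AN) f = lam • f - AN f := by
      simp [Algebra.algebraMap_eq_smul_one]
    rw [e]
    filter_upwards [hA f, Lp.coeFn_sub (lam • f) (AN f), Lp.coeFn_smul lam f] with y h1 h2 h3
    rw [h2, Pi.sub_apply, h3, h1, Pi.smul_apply, smul_eq_mul]
    ring
  -- pulling the division through
  have hdiv : ∀ (y : ℝ) (e : Fin N → ℂ), (∃ i, s y = m i) →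
      (lam + s y) * ∑ i, (α * e i / (lam + m i)) * ψ i y = α * ∑ i, e i * ψ i y := by
    intro y e _
    rw [Finset.mul_sum, Finset.mul_sum]
    refine Finset.sum_congr rfl fun i _ => ?_
    by_cases h0 : ψ i y = 0
    · simp [h0]
    · rw [hs_supp i y h0]
      field_simp [hne' i]
  have hsm : AEStronglyMeasurable (fun y => (s y : ℂ)) μ := by
    have h1m : MemLp (fun _ : ℝ => (1 : ℂ)) ⊤ μ := memLp_const 1
    have h2 := hA (h1m.toLp _)
    have h3 := h1m.coeFn_toLp
    have h4 : (fun y => (s y : ℂ)) =ᵐ[μ] fun y =>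
        (∑ i, (α * ∑ j, K i j * ∫ u, ψ j u * (h1m.toLp _) u ∂μ) * ψ i y)
          - AN (h1m.toLp _) y := by
      filter_upwards [h2, h3] with y h2 h3
      rw [h2, h3, Finset.mul_sum]
      simp only [mul_assoc]
      ring
    exact ((degen_memLp hψmeas hψbd _).aestronglyMeasurable.sub
      (Lp.aestronglyMeasurable _)).congr h4.symm
  let L : (Fin N → ℂ) →ₗ[ℂ] (Fin N → ℂ) :=
    { toFun := fun c l => (lam + m l) * c l
        - α * (∑ j, K l j * c j) * (∫ y, (ψ l y) ^ 2 ∂μ)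
      map_add' := by
        intro c d
        funext l
        simp only [Pi.add_apply, mul_add, Finset.sum_add_distrib]
        ring
      map_smul' := by
        intro r c
        funext l
        have : ∑ j, K l j * (r * c j) = r * ∑ j, K l j * c j := by
          rw [Finset.mul_sum]
          exact Finset.sum_congr rfl fun j _ => by ring
        simp only [Pi.smul_apply, smul_eq_mul, this, RingHom.id_apply]
        ring }
  have hLap : ∀ c l, L c l = (lam + m l) * c l
        - α * (∑ j, K l j * c j) * (∫ y, (ψ l y) ^ 2 ∂μ) := fun _ _ => rfl
  have hLker : ∀ c, L c = 0 → c = 0 := by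
    intro c hc
    by_contra hc0
    obtain ⟨l, hl⟩ := hcon c hc0
    apply hl
    have := congrFun hc l
    rw [hLap, Pi.zero_apply] at this
    exact (sub_eq_zero.mp this).symm
  have hLinj : Function.Injective L := (injective_iff_map_eq_zero L).2 hLker
  have hLsurj : Function.Surjective L := LinearMap.injective_iff_surjective.1 hLinj
  rw [spectrum.mem_resolventSet_iff, ContinuousLinearMap.isUnit_iff_bijective]
  constructor
  · rw [injective_iff_map_eq_zero]
    intro f hf0
    have hf := hT f
    rw [hf0] at hf
    have hz := Lp.coeFn_zero ℂ ⊤ μ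
    have hfe : ⇑f =ᵐ[μ] fun y => (0 : ℂ)
        + ∑ i, (α * (∑ j, K i j * ∫ u, ψ j u * f u ∂μ) / (lam + m i)) * ψ i y := by
      filter_upwards [hf, hz, hs_range] with y h1 h2 h3
      rw [h2, Pi.zero_apply] at h1
      rw [← hdiv y _ h3, ← mul_sub] at h1
      obtain ⟨i, hi⟩ := h3
      rcases mul_eq_zero.1 h1.symm with h | h
      · rw [hi] at h
        exact absurd h (hne' i)
      · rw [zero_add]
        exact sub_eq_zero.1 h
    have hc : (fun l => ∫ u, ψ l u * f u ∂μ) = 0 := by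
      apply hLker
      funext l
      have := degen_moment hψmeas hψbd horth _ (memLp_const (0 : ℂ)) hfe l
      rw [hLap, Pi.zero_apply]
      simp only [mul_zero, integral_zero, zero_add] at this
      have h5 : (lam + m l) * ∫ u, ψ l u * f u ∂μ
          = α * (∑ j, K l j * ∫ u, ψ j u * f u ∂μ) * ∫ u, (ψ l u) ^ 2 ∂μ := by
        conv_lhs => rw [this]
        rw [← mul_assoc, mul_div_cancel₀ _ (hne' l)]
      rw [h5, sub_self]
    rw [Lp.eq_zero_iff_ae_eq_zero]
    filter_upwards [hfe] with y hy
    rw [hy]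
    have hc' : ∀ l, ∫ u, ψ l u * f u ∂μ = 0 := fun l => congrFun hc l
    simp [hc']
  · intro g
    have hr : MemLp (fun y => (lam + (s y : ℂ))⁻¹ * g y) ⊤ μ := by
      have hb : MemLp (fun y => (lam + (s y : ℂ))⁻¹) ⊤ μ := by
        refine memLp_top_of_bound ?_ (∑ i, ‖(lam + (m i : ℂ))⁻¹‖) ?_
        · exact (aestronglyMeasurable_const.add hsm).aemeasurable.inv.aestronglyMeasurable
        · filter_upwards [hs_range] with y hy
          obtain ⟨i, hi⟩ := hy
          rw [hi]
          exact Finset.single_le_sum (f := fun i => ‖(lam + (m i : ℂ))⁻¹‖)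
            (fun _ _ => norm_nonneg _) (Finset.mem_univ i)
      exact (Lp.memLp g).mul hb
    obtain ⟨c, hc⟩ := hLsurj
      (fun l => (lam + m l) * ∫ u, ψ l u * ((lam + (s u : ℂ))⁻¹ * g u) ∂μ)
    have hfm := hr.add (degen_memLp (μ := μ) hψmeas hψbd
      (fun i => α * (∑ j, K i j * c j) / (lam + m i)))
    have hfe := hfm.coeFn_toLp
    refine ⟨hfm.toLp _, ?_⟩
    generalize hfm.toLp _ = f at hfe
    have hcf : ∀ l, ∫ u, ψ l u * f u ∂μ = c l := by
      intro l
      have h1 := degen_moment hψmeas hψbd horth _ hr hfe l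
      have h2 := congrFun hc l
      rw [hLap] at h2
      apply mul_left_cancel₀ (hne' l)
      rw [h1, mul_add, ← h2, ← mul_assoc, mul_div_cancel₀ _ (hne' l)]
      ring
    apply Lp.ext
    filter_upwards [hT f, hfe, hs_range] with y h1 h2 h3
    rw [h1]
    simp only [hcf]
    rw [h2, Pi.add_apply, mul_add, hdiv y _ h3]
    obtain ⟨i, hi⟩ := h3
    rw [hi, mul_inv_cancel_left₀ (hne' i)]
    ring

/-- Any point `λ` of the spectrum of `A_N = K_N − M_N` (degenerate-kernel integral
operator minus multiplication by a piecewise constant function with values `m_i`)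
with `λ ∉ {−m_1,…,−m_N}` is an eigenvalue of the `N×N` matrix `A` with entries
`a_{ij} = α k(t_i,t_j) ∫ ψ_i² − m_i δ_{ij}`. -/
theorem spectrum_of_degenerate_operator (a b : ℝ) (hab : a < b) (N : ℕ) (α : ℝ)
    (ψ : Fin N → ℝ → ℂ) (hψmeas : ∀ i, Measurable (ψ i))
    (hψbd : ∀ i, ∃ B : ℝ, ∀ y, ‖ψ i y‖ ≤ B)
    (horth : ∀ i p : Fin N, i ≠ p → ∫ y in Icc a b, ψ i y * ψ p y = 0)
    (t : Fin N → ℝ) (k : ℝ → ℝ → ℂ) (m : Fin N → ℝ) (s : ℝ → ℝ)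
    (hs_supp : ∀ (i : Fin N) (y : ℝ), ψ i y ≠ 0 → s y = m i)
    (hs_range : ∀ y ∈ Icc a b, ∃ i, s y = m i)
    (AN : Lp ℂ ⊤ (volume.restrict (Icc a b)) →L[ℂ] Lp ℂ ⊤ (volume.restrict (Icc a b)))
    (hAN : ∀ f : Lp ℂ ⊤ (volume.restrict (Icc a b)),
      ⇑(AN f) =ᵐ[volume.restrict (Icc a b)] fun y =>
        (α : ℂ) * (∫ u in Icc a b,
          (∑ i : Fin N, ∑ j : Fin N, k (t i) (t j) * ψ i y * ψ j u) * f u)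
        - (s y : ℂ) * f y)
    (lam : ℂ) (hlam : lam ∈ spectrum ℂ AN) (hne : ∀ i : Fin N, lam ≠ -(m i : ℂ)) :
    ∃ c : Fin N → ℂ, c ≠ 0 ∧
      (Matrix.of fun i j : Fin N =>
        (α : ℂ) * k (t i) (t j) * (∫ y in Icc a b, (ψ i y) ^ 2)
          - if i = j then (m i : ℂ) else 0).mulVec c = lam • c := by
  obtain ⟨c, hc0, hc⟩ := degen_main (μ := volume.restrict (Icc a b)) (α : ℂ) hψmeas hψbd horth
    (fun i j => k (t i) (t j)) m s hs_supp
    ((ae_restrict_mem measurableSet_Icc).mono hs_range) AN hAN lam hlam hne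
  refine ⟨c, hc0, ?_⟩
  funext l
  have h := hc l
  simp only [Matrix.mulVec, dotProduct, Matrix.of_apply, sub_mul, Finset.sum_sub_distrib, ite_mul,
    zero_mul, Finset.sum_ite_eq, Finset.mem_univ, if_true, Pi.smul_apply, smul_eq_mul]
  rw [sub_eq_iff_eq_add, ← add_mul, ← h, Finset.mul_sum, Finset.sum_mul]
  exact Finset.sum_congr rfl fun j _ => by ring
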